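/- Suppose X ≠ ∅. Then λ₀(1−α)^m ≥ γ^l (1−α−γ)^k ≥ S₁ ≥ S − λ₁(1+α)(1−D)^{m−1}. -/

import Mathlib

open scoped BigOperators

/-- The arc relation of the oriented star `S_{k,l}` on `Fin (k+l+1)`:
vertex `0` is the center, vertices `1,…,k` are the out-leaves and
vertices `k+1,…,k+l` are the in-leaves. -/
def StarArc (k l : ℕ) (a b : Fin (k + l + 1)) : Prop :=
  (a.val = 0 ∧ 1 ≤ b.val ∧ b.val ≤ k) ∨ (b.val = 0 ∧ k + 1 ≤ a.val)

/-- `φ` witnesses an induced copy of `S_{k,l}` in the digraph with arc relation `A`: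
it is injective and maps arcs to arcs and non-arcs to non-arcs. -/
def IsStarEmb (k l : ℕ) {V : Type*} (A : V → V → Prop) (φ : Fin (k + l + 1) → V) : Prop :=
  Function.Injective φ ∧ ∀ a b, StarArc k l a b ↔ A (φ a) (φ b)

/-- `s(G)`: the probability that a uniformly random map `V(S_{k,l}) → V(G)`
induces a copy of `S_{k,l}`. -/
noncomputable def starProb (k l : ℕ) (V : Type*) [Fintype V] (A : V → V → Prop) : ℝ :=
  (Nat.card {φ : Fin (k + l + 1) → V // IsStarEmb k l A φ} : ℝ) /
    (Fintype.card V : ℝ) ^ (k + l + 1)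

/-- The probability that a uniformly random map induces a copy of `S_{k,l}`
and moreover has property `P`. -/
noncomputable def starProbOn (k l : ℕ) {V : Type*} [Fintype V] (A : V → V → Prop)
    (P : (Fin (k + l + 1) → V) → Prop) : ℝ :=
  (Nat.card {φ : Fin (k + l + 1) → V // IsStarEmb k l A φ ∧ P φ} : ℝ) /
    (Fintype.card V : ℝ) ^ (k + l + 1)

/-- `s(z→v) = Pr[φ ∈ 𝒮 | φ z = v]`. -/
noncomputable def sCond (k l : ℕ) {V : Type*} [Fintype V] (A : V → V → Prop)
    (z : Fin (k + l + 1)) (v : V) : ℝ :=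
  (Nat.card {φ : Fin (k + l + 1) → V // IsStarEmb k l A φ ∧ φ z = v} : ℝ) /
    (Fintype.card V : ℝ) ^ (k + l)

/-- `Pr[φ ∈ 𝒮 ∧ P φ | φ(c) = v]`, where `c = 0` is the center of the star. -/
noncomputable def sCondOn (k l : ℕ) {V : Type*} [Fintype V] (A : V → V → Prop) (v : V)
    (P : (Fin (k + l + 1) → V) → Prop) : ℝ :=
  (Nat.card {φ : Fin (k + l + 1) → V // IsStarEmb k l A φ ∧ φ 0 = v ∧ P φ} : ℝ) /
    (Fintype.card V : ℝ) ^ (k + l)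

open scoped Fin.NatCast in
/-- `s(v) = (s(c→v) + l·s(i→v) + k·s(o→v))/(m+1)`, where the center is `0`,
`k+1` is an in-leaf and `1` is an out-leaf. -/
noncomputable def sVert (k l : ℕ) {V : Type*} [Fintype V] (A : V → V → Prop) (v : V) : ℝ :=
  (sCond k l A 0 v + l * sCond k l A ((k + 1 : ℕ) : Fin (k + l + 1)) v
      + k * sCond k l A 1 v) / ((k : ℝ) + l + 1)

/-- `ρ(v)`: the proportion of vertices adjacent to `v`. -/
noncomputable def rho {V : Type*} [Fintype V] (A : V → V → Prop) (v : V) : ℝ :=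
  (Nat.card {u : V // A v u ∨ A u v} : ℝ) / (Fintype.card V : ℝ)

/-- `ρ⁺_B(v)`: the proportion of vertices that are out-neighbours of `v` lying in `B`. -/
noncomputable def rhoPIn {V : Type*} [Fintype V] (A : V → V → Prop) (B : Set V) (v : V) : ℝ :=
  (Nat.card {u : V // A v u ∧ u ∈ B} : ℝ) / (Fintype.card V : ℝ)

/-- `ρ⁻_B(v)`: the proportion of vertices that are in-neighbours of `v` lying in `B`. -/
noncomputable def rhoMIn {V : Type*} [Fintype V] (A : V → V → Prop) (B : Set V) (v : V) : ℝ :=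
  (Nat.card {u : V // A u v ∧ u ∈ B} : ℝ) / (Fintype.card V : ℝ)

/-- `ρ_B(v)`: the proportion of vertices adjacent to `v` lying in `B`. -/
noncomputable def rhoIn {V : Type*} [Fintype V] (A : V → V → Prop) (B : Set V) (v : V) : ℝ :=
  (Nat.card {u : V // (A v u ∨ A u v) ∧ u ∈ B} : ℝ) / (Fintype.card V : ℝ)

/-- `μ(B) = |B|/n`. -/
noncomputable def muSet {V : Type*} [Fintype V] (B : Set V) : ℝ :=
  (Nat.card B : ℝ) / (Fintype.card V : ℝ)

/-- `X`: the set of vertices of large degree, `ρ(v) ≥ 1/2`. -/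
def bigX {V : Type*} [Fintype V] (A : V → V → Prop) : Set V := {v | 1 / 2 ≤ rho A v}

/-- `Y = V(G) \ X`. -/
def bigY {V : Type*} [Fintype V] (A : V → V → Prop) : Set V := (bigX A)ᶜ

/-- `α = μ(X)`. -/
noncomputable def alphaX {V : Type*} [Fintype V] (A : V → V → Prop) : ℝ := muSet (bigX A)

/-- `D = min_{x ∈ X} ρ(x)`. -/
noncomputable def Dmin {V : Type*} [Fintype V] (A : V → V → Prop) : ℝ :=
  sInf (rho A '' bigX A)

/-- `β = max_{y ∈ Y} ρ_Y(y)`. -/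
noncomputable def betaY {V : Type*} [Fintype V] (A : V → V → Prop) : ℝ :=
  sSup ((fun y => rhoIn A (bigY A) y) '' bigY A)

/-- `γ = min_{x ∈ X} ρ⁻_Y(x)`. -/
noncomputable def gammaX {V : Type*} [Fintype V] (A : V → V → Prop) : ℝ :=
  sInf ((fun x => rhoMIn A (bigY A) x) '' bigX A)

/-- `S = (m+1)·min_{v ∈ V(G)} s(v)`. -/
noncomputable def Smin (k l : ℕ) {V : Type*} [Fintype V] (A : V → V → Prop) : ℝ :=
  ((k : ℝ) + l + 1) * sInf (Set.range (sVert k l A))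

/-- `S₁ = min_{x ∈ X} (ρ⁺_Y(x))^k (ρ⁻_Y(x))^l`. -/
noncomputable def S1min (k l : ℕ) {V : Type*} [Fintype V] (A : V → V → Prop) : ℝ :=
  sInf ((fun x => rhoPIn A (bigY A) x ^ k * rhoMIn A (bigY A) x ^ l) '' bigX A)

/-- `S₂ = S₁ − ((m−1)/((m+1)·C(m,k)))·(α+β)(1−α)(1−D)^{m−2}`. -/
noncomputable def S2min (k l : ℕ) {V : Type*} [Fintype V] (A : V → V → Prop) : ℝ :=
  S1min k l A - (((k : ℝ) + l - 1) / (((k : ℝ) + l + 1) * (Nat.choose (k + l) k : ℝ)))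
    * (alphaX A + betaY A) * (1 - alphaX A) * (1 - Dmin A) ^ (k + l - 2)

/-- `λ₀ = k^k l^l / m^m`. -/
noncomputable def lam0 (k l : ℕ) : ℝ := (k : ℝ) ^ k * (l : ℝ) ^ l / ((k : ℝ) + l) ^ (k + l)

/-- `λ₁ = k^k l (l−1)^{l−1} / (m−1)^{m−1}` (with the convention `0⁰ = 1`). -/
noncomputable def lam1 (k l : ℕ) : ℝ :=
  (k : ℝ) ^ k * (l : ℝ) * ((l : ℝ) - 1) ^ (l - 1) / ((k : ℝ) + l - 1) ^ (k + l - 1)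

/-- The edge density `ρ(Z)` of a set of vertices `Z`: the number of unordered adjacent
pairs in `Z` divided by `C(|Z|,2)`. -/
noncomputable def densSet {V : Type*} [Fintype V] (A : V → V → Prop) (Z : Set V) : ℝ :=
  ((Nat.card {p : V × V // p.1 ∈ Z ∧ p.2 ∈ Z ∧ (A p.1 p.2 ∨ A p.2 p.1)} : ℝ) / 2) /
    (Nat.choose (Nat.card Z) 2 : ℝ)

/-- `d = 1 − (E_{x ∈ X} ρ⁻_Y(x))/(1−α)`. -/
noncomputable def dXY {V : Type*} [Fintype V] (A : V → V → Prop) : ℝ :=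
  1 - ((∑ᶠ x ∈ bigX A, rhoMIn A (bigY A) x) / (Nat.card (bigX A) : ℝ)) / (1 - alphaX A)

/-- `OPT(k,l)`. -/
noncomputable def OPT (k l : ℕ) : ℝ :=
  if k = l then
    (1 / 2 ^ (2 * k)) *
      sSup {y : ℝ | ∃ a ∈ Set.Icc (0 : ℝ) 1, y = a * (1 - a) ^ (2 * k) + (1 - a) * a ^ (2 * k)}
  else
    sSup {y : ℝ | ∃ a ∈ Set.Icc (0 : ℝ) (1 / 2),
      ∃ d ∈ Set.Icc (0 : ℝ) ((k : ℝ) / ((k : ℝ) + (l : ℝ))),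
      y = a * (1 - a) ^ (k + l) * d ^ k * (1 - d) ^ l
        + (((k : ℝ) - 1) ^ (k - 1) * (l : ℝ) ^ l / ((k : ℝ) + (l : ℝ) - 1) ^ (k + l - 1))
          * (1 - a) * a ^ (k + l) * (1 - d)}

/-!
Write `s(c→v, z→w)` for the probability that a random map is an induced copy of the star, given that
it sends the center to `v` and the leaf `z` to `w`. In such a copy all other leaves are neighbors of
`v` and non-neighbors of `w`; the latter have density `1 - ρ(w)`. As there are no opposite arcs,
only in-leaves or only out-leaves can be sent to `w`, so AM-GM bounds
`l * s(c→v, i→w) + k * s(c→v, o→w)` by the larger of `l λ₀(k, l-1)` and `k λ₀(k-1, l)` times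
`(1 - ρ(w)) ^ (m-1)`. The larger one is the first, `l λ₀(k, l-1) = λ₁`, because `(1 + 1/n) ^ n`
increases and `l ≤ k`.

Let `x ∈ X`. Averaging over `v` with `w = x` bounds `l * s(i→x) + k * s(o→x)` by
`λ₁ (1 - D) ^ (m-1)`. A copy centered at `x` either has all its leaves in `Y`, with probability at
most `ρ⁺_Y(x) ^ k * ρ⁻_Y(x) ^ l`, or some leaf in `X`, with probability at most
`α λ₁ (1 - D) ^ (m-1)`. As `S` is at most the sum of these three bounds, choosing `x` to attain `S₁`
gives the last inequality. The first two follow by taking `x` to attain `γ`, where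
`ρ⁺_Y(x) ≤ 1 - α - γ`.
-/

section Optimization

lemma pow_mul_pow_le_lam0_mul_pow (p q : ℕ) {a b t : ℝ} (ha : 0 ≤ a) (hb : 0 ≤ b)
    (hab : a + b ≤ t) : a ^ p * b ^ q ≤ lam0 p q * t ^ (p + q) := by
  rcases p.eq_zero_or_pos with rfl | hp
  · rcases q.eq_zero_or_pos with rfl | hq
    · simp [lam0]
    · have : b ^ q ≤ t ^ q := by gcongr; linarith
      simpa [lam0, hq.ne'] using this
  rcases q.eq_zero_or_pos with rfl | hq
  · have : a ^ p ≤ t ^ p := by gcongr; linarith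
    simpa [lam0, hp.ne'] using this
  have hamgm : (a / p) ^ ((p : ℝ) / (p + q)) * (b / q) ^ ((q : ℝ) / (p + q)) ≤ t / (p + q) :=
    calc _ ≤ (p : ℝ) / (p + q) * (a / p) + q / (p + q) * (b / q) :=
          Real.geom_mean_le_arith_mean2_weighted (by positivity) (by positivity) (by positivity)
            (by positivity) (by field_simp)
      _ = (a + b) / (p + q) := by field_simp
      _ ≤ t / (p + q) := by gcongr
  have hpow := pow_le_pow_left₀ (by positivity) hamgm (p + q)
  have hexp_p : (p : ℝ) / (p + q) * ((p + q : ℕ) : ℝ) = p := by push_cast; field_simp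
  have hexp_q : (q : ℝ) / (p + q) * ((p + q : ℕ) : ℝ) = q := by push_cast; field_simp
  rw [mul_pow, ← Real.rpow_mul_natCast (by positivity), ← Real.rpow_mul_natCast (by positivity),
    hexp_p, hexp_q, Real.rpow_natCast, Real.rpow_natCast, div_pow, div_pow, div_pow,
    div_mul_div_comm, div_le_div_iff₀ (by positivity) (by positivity)] at hpow
  rw [lam0, div_mul_eq_mul_div, le_div_iff₀ (by positivity)]
  linarith

lemma monotone_succ_pow_div_self_pow : Monotone fun n : ℕ => ((n : ℝ) + 1) ^ n / (n : ℝ) ^ n := by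
  refine monotone_nat_of_le_succ fun n => ?_
  have hpos : (0 : ℝ) < (n : ℝ) ^ n := by exact_mod_cast n.pow_self_pos
  -- AM-GM for `n` copies of `n + 1` and one copy of `1`, whose sum is `n + 2`.
  have hamgm := pow_mul_pow_le_lam0_mul_pow n 1 (a := (n : ℝ) + 1) (b := 1) (t := n + 2)
    (by positivity) zero_le_one (by linarith)
  simp only [lam0, Nat.cast_one, one_pow, mul_one] at hamgm
  rw [div_mul_eq_mul_div, le_div_iff₀ (by positivity)] at hamgm
  rw [div_le_div_iff₀ hpos (by positivity)]
  push_cast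
  calc ((n : ℝ) + 1) ^ n * ((n : ℝ) + 1) ^ (n + 1) ≤ (n : ℝ) ^ n * (n + 2) ^ (n + 1) := hamgm
    _ = ((n : ℝ) + 1 + 1) ^ (n + 1) * (n : ℝ) ^ n := by ring

lemma mul_lam0_pred_right (k : ℕ) {l : ℕ} (hl : 1 ≤ l) : l * lam0 k (l - 1) = lam1 k l := by
  obtain ⟨q, rfl⟩ := Nat.exists_eq_add_of_le' hl
  have hsum : (k : ℝ) + (q + 1) - 1 = k + q := by ring
  simp only [lam0, lam1, Nat.add_sub_cancel, ← Nat.add_assoc, Nat.cast_add_one, hsum,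
    add_sub_cancel_right]
  ring

lemma lam1_nonneg (k : ℕ) {l : ℕ} (hl : 1 ≤ l) : 0 ≤ lam1 k l := by
  rw [← mul_lam0_pred_right k hl, lam0]
  positivity

lemma mul_lam0_pred_left_le {k l : ℕ} (hl : 1 ≤ l) (hlk : l ≤ k) :
    k * lam0 (k - 1) l ≤ lam1 k l := by
  obtain ⟨q, rfl⟩ := Nat.exists_eq_add_of_le' hl
  obtain ⟨p, rfl⟩ := Nat.exists_eq_add_of_le' (hl.trans hlk)
  have hpos (n : ℕ) : (0 : ℝ) < (n : ℝ) ^ n := by exact_mod_cast n.pow_self_pos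
  have hmono : ((q : ℝ) + 1) ^ q * (p : ℝ) ^ p ≤ ((p : ℝ) + 1) ^ p * (q : ℝ) ^ q :=
    (div_le_div_iff₀ (hpos q) (hpos p)).1 (monotone_succ_pow_div_self_pow (by omega : q ≤ p))
  have hsum : (p : ℝ) + 1 + (q + 1) - 1 = p + (q + 1) := by ring
  have hexp : p + 1 + (q + 1) - 1 = p + (q + 1) := by omega
  simp only [lam0, lam1, Nat.add_sub_cancel, Nat.cast_add_one, hsum, hexp, add_sub_cancel_right]
  rw [← mul_div_assoc]
  gcongr ?_ / _
  calc ((p : ℝ) + 1) * ((p : ℝ) ^ p * (q + 1) ^ (q + 1))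
      = (p + 1) * (q + 1) * ((q + 1) ^ q * (p : ℝ) ^ p) := by ring
    _ ≤ (p + 1) * (q + 1) * (((p : ℝ) + 1) ^ p * (q : ℝ) ^ q) := by gcongr
    _ = _ := by ring

end Optimization

section Density

variable {V : Type*} [Fintype V] (A : V → V → Prop)

lemma muSet_nonneg (B : Set V) : 0 ≤ muSet B := by
  unfold muSet; positivity

lemma muSet_mono {B C : Set V} (h : B ⊆ C) : muSet B ≤ muSet C := by
  unfold muSet
  gcongr
  exact Nat.card_mono (Set.toFinite C) h

lemma muSet_union_of_disjoint {B C : Set V} (h : Disjoint B C) :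
    muSet (B ∪ C) = muSet B + muSet C := by
  simp only [muSet, Nat.card_coe_set_eq, Set.ncard_union_eq h, Nat.cast_add, add_div]

lemma muSet_compl [Nonempty V] (B : Set V) : muSet Bᶜ = 1 - muSet B := by
  have huniv : muSet (Set.univ : Set V) = 1 := by simp [muSet]
  rw [← huniv, ← Set.union_compl_self B, muSet_union_of_disjoint disjoint_compl_right]
  ring

lemma rhoPIn_nonneg (B : Set V) (v : V) : 0 ≤ rhoPIn A B v :=
  muSet_nonneg {u | A v u ∧ u ∈ B}

lemma rhoMIn_nonneg (B : Set V) (v : V) : 0 ≤ rhoMIn A B v :=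
  muSet_nonneg {u | A u v ∧ u ∈ B}

/-- The vertices that are not adjacent to `w`, where the other leaves of a star copy with a leaf
at `w` must lie; `w` itself belongs to this set when it has no loop. -/
def nonNeighbors (w : V) : Set V := {u | A w u ∨ A u w}ᶜ

lemma muSet_nonNeighbors (w : V) : muSet (nonNeighbors A w) = 1 - rho A w :=
  have : Nonempty V := ⟨w⟩
  muSet_compl _

variable {A} (hopp : ∀ u v, A u v → ¬ A v u)
include hopp

lemma rhoPIn_add_rhoMIn_le_muSet (B : Set V) (v : V) : rhoPIn A B v + rhoMIn A B v ≤ muSet B := by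
  have hdisj : Disjoint {u | A v u ∧ u ∈ B} {u | A u v ∧ u ∈ B} :=
    Set.disjoint_left.2 fun u hout hin => hopp _ _ hout.1 hin.1
  calc rhoPIn A B v + rhoMIn A B v = muSet ({u | A v u ∧ u ∈ B} ∪ {u | A u v ∧ u ∈ B}) :=
        (muSet_union_of_disjoint hdisj).symm
    _ ≤ muSet B := muSet_mono (Set.union_subset (fun _ h => h.2) fun _ h => h.2)

lemma rhoPIn_pow_mul_rhoMIn_pow_le (p q : ℕ) (B : Set V) (v : V) :
    rhoPIn A B v ^ p * rhoMIn A B v ^ q ≤ lam0 p q * muSet B ^ (p + q) :=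
  pow_mul_pow_le_lam0_mul_pow p q (rhoPIn_nonneg A B v) (rhoMIn_nonneg A B v)
    (rhoPIn_add_rhoMIn_le_muSet hopp B v)

end Density

section Star

variable {k l : ℕ}

/-- The out-leaves of the star `S_{k,l}`, as vertices `1,…,k`. -/
def outLeaf (i : Fin k) : Fin (k + l + 1) := (Fin.castAdd l i).succ

/-- The in-leaves of the star `S_{k,l}`, as vertices `k+1,…,k+l`. -/
def inLeaf (j : Fin l) : Fin (k + l + 1) := (Fin.natAdd k j).succ

lemma forall_star_iff {p : Fin (k + l + 1) → Prop} :
    (∀ a, p a) ↔ p 0 ∧ (∀ i, p (outLeaf i)) ∧ ∀ j, p (inLeaf j) := by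
  rw [Fin.forall_fin_succ]
  exact and_congr_right fun _ => ⟨fun h => ⟨fun _ => h _, fun _ => h _⟩,
    fun h => Fin.addCases h.1 h.2⟩

variable {V : Type*} {A : V → V → Prop} {φ : Fin (k + l + 1) → V}

namespace IsStarEmb

lemma adj_outLeaf (h : IsStarEmb k l A φ) (i : Fin k) : A (φ 0) (φ (outLeaf i)) :=
  (h.2 _ _).1 <| Or.inl ⟨rfl, by simp [outLeaf]⟩

lemma adj_inLeaf (h : IsStarEmb k l A φ) (j : Fin l) : A (φ (inLeaf j)) (φ 0) :=
  (h.2 _ _).1 <| Or.inr ⟨rfl, by simp [inLeaf]⟩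

lemma mem_nonNeighbors_of_leaves (h : IsStarEmb k l A φ) (a b : Fin (k + l)) :
    φ a.succ ∈ nonNeighbors A (φ b.succ) := by
  simp [nonNeighbors, ← h.2, StarArc]

end IsStarEmb

lemma natCard_le_prod_mul_prod [Finite V] {Q : (Fin (k + l + 1) → V) → Prop} {v : V}
    {P : Fin k → Set V} {R : Fin l → Set V} (hcenter : ∀ φ, Q φ → φ 0 = v)
    (hout : ∀ φ, Q φ → ∀ i, φ (outLeaf i) ∈ P i) (hin : ∀ φ, Q φ → ∀ j, φ (inLeaf j) ∈ R j) :
    Nat.card {φ // Q φ} ≤ (∏ i, Nat.card (P i)) * ∏ j, Nat.card (R j) := by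
  rw [← Nat.card_pi, ← Nat.card_pi, ← Nat.card_prod]
  refine Nat.card_le_card_of_injective
    (fun φ => (fun i => ⟨φ.1 (outLeaf i), hout φ.1 φ.2 i⟩,
      fun j => ⟨φ.1 (inLeaf j), hin φ.1 φ.2 j⟩)) fun φ ψ h => ?_
  simp only [Prod.mk.injEq, funext_iff, Subtype.mk.injEq] at h
  exact Subtype.ext <| funext <| forall_star_iff.2
    ⟨(hcenter _ φ.2).trans (hcenter _ ψ.2).symm, h.1, h.2⟩

lemma prod_natCard_update_singleton {n : ℕ} (T : Set V) (i : Fin n) (w : V) :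
    ∏ j, Nat.card (Function.update (fun _ => T) i {w} j) = Nat.card T ^ (n - 1) := by
  have hcard (j : Fin n) : Nat.card (Function.update (fun _ => T) i {w} j) =
      Function.update (fun _ => Nat.card T) i 1 j := by
    rw [Function.apply_update (fun _ (s : Set V) => Nat.card s), Nat.card_coe_set_eq {w},
      Set.ncard_singleton]
  simp_rw [hcard]
  rw [Finset.prod_update_of_mem (Finset.mem_univ i), Finset.prod_const, one_mul,
    Finset.card_sdiff_of_subset (Finset.subset_univ _)]
  simp

lemma natCard_exists_le {α ι : Type*} [Finite α] [Fintype ι] (P : ι → α → Prop) :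
    Nat.card {a // ∃ i, P i a} ≤ ∑ i, Nat.card {a // P i a} := by
  rw [← Nat.card_sigma]
  exact Nat.card_le_card_of_surjective (fun a => ⟨a.2.1, a.1, a.2.2⟩)
    fun ⟨a, i, h⟩ => ⟨⟨i, a, h⟩, rfl⟩

end Star

section Pair

variable {V : Type*} [Fintype V]

/-- `s(c→v, z→w) = Pr[φ ∈ 𝒮 | φ c = v, φ z = w]`, for `z` a leaf of the star: the normalization
`n ^ (k + l - 1)` presupposes that `z` is not the center. -/
noncomputable def sPair (k l : ℕ) (A : V → V → Prop) (z : Fin (k + l + 1)) (v w : V) : ℝ :=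
  (Nat.card {φ : Fin (k + l + 1) → V // IsStarEmb k l A φ ∧ φ 0 = v ∧ φ z = w} : ℝ) /
    (Fintype.card V : ℝ) ^ (k + l - 1)

variable {k l : ℕ} (A : V → V → Prop)

lemma sPair_outLeaf_eq_zero (i : Fin k) {v w : V} (h : ¬ A v w) :
    sPair k l A (outLeaf i) v w = 0 := by
  have : IsEmpty {φ // IsStarEmb k l A φ ∧ φ 0 = v ∧ φ (outLeaf i) = w} :=
    ⟨fun ⟨_, hφ, hv, hw⟩ => h (hv ▸ hw ▸ hφ.adj_outLeaf i)⟩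
  simp [sPair]

lemma sPair_inLeaf_eq_zero (j : Fin l) {v w : V} (h : ¬ A w v) :
    sPair k l A (inLeaf j) v w = 0 := by
  have : IsEmpty {φ // IsStarEmb k l A φ ∧ φ 0 = v ∧ φ (inLeaf j) = w} :=
    ⟨fun ⟨_, hφ, hv, hw⟩ => h (hv ▸ hw ▸ hφ.adj_inLeaf j)⟩
  simp [sPair]

lemma sPair_outLeaf_le (i : Fin k) (v w : V) :
    sPair k l A (outLeaf i) v w ≤
      rhoPIn A (nonNeighbors A w) v ^ (k - 1) * rhoMIn A (nonNeighbors A w) v ^ l := by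
  have hcount : Nat.card {φ // IsStarEmb k l A φ ∧ φ 0 = v ∧ φ (outLeaf i) = w} ≤ _ :=
    natCard_le_prod_mul_prod
      (P := Function.update (fun _ => {u | A v u ∧ u ∈ nonNeighbors A w}) i {w})
      (R := fun _ => {u | A u v ∧ u ∈ nonNeighbors A w}) (fun _ h => h.2.1)
      (by
        rintro φ ⟨hφ, rfl, rfl⟩
        exact (Function.forall_update_iff _ fun i s => φ (outLeaf i) ∈ s).2
          ⟨rfl, fun _ _ => ⟨hφ.adj_outLeaf _, hφ.mem_nonNeighbors_of_leaves _ _⟩⟩)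
      (by
        rintro φ ⟨hφ, rfl, rfl⟩ j
        exact ⟨hφ.adj_inLeaf j, hφ.mem_nonNeighbors_of_leaves _ _⟩)
  rw [prod_natCard_update_singleton, Finset.prod_const, Finset.card_fin] at hcount
  rw [sPair, rhoPIn, rhoMIn, div_pow, div_pow, div_mul_div_comm, ← pow_add,
    show k + l - 1 = k - 1 + l by have := i.pos; omega]
  gcongr
  exact_mod_cast hcount

lemma sPair_inLeaf_le (j : Fin l) (v w : V) :
    sPair k l A (inLeaf j) v w ≤
      rhoPIn A (nonNeighbors A w) v ^ k * rhoMIn A (nonNeighbors A w) v ^ (l - 1) := by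
  have hcount : Nat.card {φ // IsStarEmb k l A φ ∧ φ 0 = v ∧ φ (inLeaf j) = w} ≤ _ :=
    natCard_le_prod_mul_prod (P := fun _ => {u | A v u ∧ u ∈ nonNeighbors A w})
      (R := Function.update (fun _ => {u | A u v ∧ u ∈ nonNeighbors A w}) j {w})
      (fun _ h => h.2.1)
      (by
        rintro φ ⟨hφ, rfl, rfl⟩ i
        exact ⟨hφ.adj_outLeaf i, hφ.mem_nonNeighbors_of_leaves _ _⟩)
      (by
        rintro φ ⟨hφ, rfl, rfl⟩
        exact (Function.forall_update_iff _ fun j s => φ (inLeaf j) ∈ s).2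
          ⟨rfl, fun _ _ => ⟨hφ.adj_inLeaf _, hφ.mem_nonNeighbors_of_leaves _ _⟩⟩)
  rw [prod_natCard_update_singleton, Finset.prod_const, Finset.card_fin] at hcount
  rw [sPair, rhoPIn, rhoMIn, div_pow, div_pow, div_mul_div_comm, ← pow_add,
    show k + l - 1 = k + (l - 1) by have := j.pos; omega]
  gcongr
  exact_mod_cast hcount

lemma sCond_le_sum_sPair (hkl : 1 ≤ k + l) (z : Fin (k + l + 1)) (x : V) :
    sCond k l A z x ≤ (∑ v, sPair k l A z v x) / Fintype.card V := by
  have hcount := natCard_exists_le fun v (φ : Fin (k + l + 1) → V) =>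
    IsStarEmb k l A φ ∧ φ 0 = v ∧ φ z = x
  simp only [exists_and_left, exists_eq_left'] at hcount
  simp only [sPair, ← Finset.sum_div, div_div, pow_sub_one_mul (Nat.one_le_iff_ne_zero.1 hkl)]
  unfold sCond
  gcongr
  exact_mod_cast hcount

lemma sCondOn_leaves_mem_le (B : Set V) (x : V) :
    sCondOn k l A x (fun φ => ∀ a : Fin (k + l), φ a.succ ∈ B) ≤
      rhoPIn A B x ^ k * rhoMIn A B x ^ l := by
  have hcount :
      Nat.card {φ // IsStarEmb k l A φ ∧ φ 0 = x ∧ ∀ a : Fin (k + l), φ a.succ ∈ B} ≤ _ :=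
    natCard_le_prod_mul_prod (P := fun _ => {u | A x u ∧ u ∈ B}) (R := fun _ => {u | A u x ∧ u ∈ B})
      (fun _ h => h.2.1)
      (by
        rintro φ ⟨hφ, rfl, hB⟩ i
        exact ⟨hφ.adj_outLeaf i, hB _⟩)
      (by
        rintro φ ⟨hφ, rfl, hB⟩ j
        exact ⟨hφ.adj_inLeaf j, hB _⟩)
  simp only [Finset.prod_const, Finset.card_fin] at hcount
  rw [sCondOn, rhoPIn, rhoMIn, div_pow, div_pow, div_mul_div_comm, ← pow_add]
  gcongr
  exact_mod_cast hcount

lemma sCond_center_le (hkl : 1 ≤ k + l) (X : Set V) [Fintype X] (x : V) :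
    sCond k l A 0 x ≤ sCondOn k l A x (fun φ => ∀ a : Fin (k + l), φ a.succ ∈ Xᶜ) +
      (∑ w : X, ∑ a : Fin (k + l), sPair k l A a.succ x w) / Fintype.card V := by
  let event : Option (X × Fin (k + l)) → (Fin (k + l + 1) → V) → Prop
    | none, φ => ∀ a : Fin (k + l), φ a.succ ∈ Xᶜ
    | some (w, a), φ => φ a.succ = w
  have hcover (φ : Fin (k + l + 1) → V) : ∃ e, event e φ := by
    by_cases h : ∀ a : Fin (k + l), φ a.succ ∈ Xᶜ
    · exact ⟨none, h⟩
    · obtain ⟨a, ha⟩ := not_forall.1 h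
      exact ⟨some (⟨φ a.succ, not_not.1 ha⟩, a), rfl⟩
  have hcount := natCard_exists_le fun e φ => IsStarEmb k l A φ ∧ φ 0 = x ∧ event e φ
  simp only [exists_and_left, hcover, and_true, Fintype.sum_option, Fintype.sum_prod_type,
    event] at hcount
  simp only [sPair, ← Finset.sum_div, div_div, pow_sub_one_mul (Nat.one_le_iff_ne_zero.1 hkl)]
  rw [sCondOn, ← add_div]
  unfold sCond
  gcongr
  exact_mod_cast hcount

variable {A} (hopp : ∀ u v, A u v → ¬ A v u)
include hopp

lemma weighted_sPair_le (hl : 1 ≤ l) (hlk : l ≤ k) (i : Fin k) (j : Fin l) (v w : V) :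
    l * sPair k l A (inLeaf j) v w + k * sPair k l A (outLeaf i) v w ≤
      lam1 k l * (1 - rho A w) ^ (k + l - 1) := by
  have hnonneg : 0 ≤ 1 - rho A w := muSet_nonNeighbors A w ▸ muSet_nonneg _
  by_cases hvw : A v w
  · rw [sPair_inLeaf_eq_zero A j (hopp v w hvw), mul_zero, zero_add]
    calc k * sPair k l A (outLeaf i) v w
        ≤ k * (lam0 (k - 1) l * muSet (nonNeighbors A w) ^ (k - 1 + l)) := by
          gcongr
          exact (sPair_outLeaf_le A i v w).trans (rhoPIn_pow_mul_rhoMIn_pow_le hopp _ _ _ v)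
      _ = k * lam0 (k - 1) l * (1 - rho A w) ^ (k + l - 1) := by
          rw [muSet_nonNeighbors, mul_assoc, show k - 1 + l = k + l - 1 by omega]
      _ ≤ lam1 k l * (1 - rho A w) ^ (k + l - 1) := by
          gcongr
          exact mul_lam0_pred_left_le hl hlk
  · rw [sPair_outLeaf_eq_zero A i hvw, mul_zero, add_zero]
    calc l * sPair k l A (inLeaf j) v w
        ≤ l * (lam0 k (l - 1) * muSet (nonNeighbors A w) ^ (k + (l - 1))) := by
          gcongr
          exact (sPair_inLeaf_le A j v w).trans (rhoPIn_pow_mul_rhoMIn_pow_le hopp _ _ _ v)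
      _ = lam1 k l * (1 - rho A w) ^ (k + l - 1) := by
          rw [muSet_nonNeighbors, ← mul_assoc, mul_lam0_pred_right k hl, Nat.add_sub_assoc hl]

lemma sum_leaves_sPair_le (hl : 1 ≤ l) (hlk : l ≤ k) (v w : V) :
    ∑ a : Fin (k + l), sPair k l A a.succ v w ≤ lam1 k l * (1 - rho A w) ^ (k + l - 1) := by
  have hl' : (0 : ℝ) < l := by exact_mod_cast hl
  have hk : (0 : ℝ) < k := hl'.trans_le (by exact_mod_cast hlk)
  have haverage := Finset.sum_le_sum fun (i : Fin k) (_ : i ∈ Finset.univ) =>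
    Finset.sum_le_sum fun (j : Fin l) (_ : j ∈ Finset.univ) =>
      weighted_sPair_le hopp hl hlk i j v w
  simp only [Finset.sum_add_distrib, ← Finset.mul_sum, Finset.sum_const, Finset.card_fin,
    nsmul_eq_mul] at haverage
  rw [Fin.sum_univ_add]
  refine le_of_mul_le_mul_left ?_ (mul_pos hk hl')
  calc _ = k * (l * ∑ j, sPair k l A (inLeaf j) v w) +
        l * (k * ∑ i, sPair k l A (outLeaf i) v w) := by
        simp only [outLeaf, inLeaf]; ring
    _ ≤ k * l * (lam1 k l * (1 - rho A w) ^ (k + l - 1)) := by linarith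

end Pair

section Main

variable {V : Type*} [Fintype V] {k l : ℕ} {A : V → V → Prop}

open scoped Fin.NatCast in
lemma mul_sVert (hk : 1 ≤ k) (hl : 1 ≤ l) (x : V) :
    ((k : ℝ) + l + 1) * sVert k l A x =
      sCond k l A 0 x +
        (l * sCond k l A (inLeaf ⟨0, hl⟩) x + k * sCond k l A (outLeaf ⟨0, hk⟩) x) := by
  have hin : ((k + 1 : ℕ) : Fin (k + l + 1)) = inLeaf ⟨0, hl⟩ :=
    Fin.ext <| (Fin.val_natCast _ _).trans <| Nat.mod_eq_of_lt (by omega)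
  have hout : (1 : Fin (k + l + 1)) = outLeaf ⟨0, hk⟩ :=
    Fin.ext <| (Fin.val_one' _).trans <| Nat.mod_eq_of_lt (by omega)
  rw [sVert, mul_div_cancel₀ _ (by positivity), hin, hout, add_assoc]

lemma Smin_le_mul_sVert (x : V) : Smin k l A ≤ ((k : ℝ) + l + 1) * sVert k l A x := by
  unfold Smin
  gcongr
  exact csInf_le (Set.finite_range _).bddBelow (Set.mem_range_self x)

lemma lam1_mul_pow_le (k : ℕ) (hl : 1 ≤ l) {D : ℝ} {x : V} (hD : D ≤ rho A x) :
    lam1 k l * (1 - rho A x) ^ (k + l - 1) ≤ lam1 k l * (1 - D) ^ (k + l - 1) := by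
  have := lam1_nonneg k hl
  have : 0 ≤ 1 - rho A x := muSet_nonNeighbors A x ▸ muSet_nonneg _
  gcongr

variable (hopp : ∀ u v, A u v → ¬ A v u) (hl : 1 ≤ l) (hlk : l ≤ k)
include hopp hl hlk

lemma weighted_sCond_leaves_le (i : Fin k) (j : Fin l) (x : V) :
    l * sCond k l A (inLeaf j) x + k * sCond k l A (outLeaf i) x ≤
      lam1 k l * (1 - rho A x) ^ (k + l - 1) := by
  have : Nonempty V := ⟨x⟩
  calc l * sCond k l A (inLeaf j) x + k * sCond k l A (outLeaf i) x
      ≤ l * ((∑ v, sPair k l A (inLeaf j) v x) / Fintype.card V) +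
          k * ((∑ v, sPair k l A (outLeaf i) v x) / Fintype.card V) := by
        gcongr <;> exact sCond_le_sum_sPair A (by omega) _ x
    _ = (∑ v, (l * sPair k l A (inLeaf j) v x + k * sPair k l A (outLeaf i) v x)) /
          Fintype.card V := by
        rw [Finset.sum_add_distrib, ← Finset.mul_sum, ← Finset.mul_sum]; ring
    _ ≤ (∑ _v : V, lam1 k l * (1 - rho A x) ^ (k + l - 1)) / Fintype.card V := by
        gcongr with v
        exact weighted_sPair_le hopp hl hlk i j v x
    _ = lam1 k l * (1 - rho A x) ^ (k + l - 1) := by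
        rw [Finset.sum_const, Finset.card_univ, nsmul_eq_mul, mul_div_cancel_left₀ _ (by simp)]

variable {X : Set V} {D : ℝ} (hD : ∀ x ∈ X, D ≤ rho A x)
include hD

lemma sCond_center_le_add (x : V) :
    sCond k l A 0 x ≤ rhoPIn A Xᶜ x ^ k * rhoMIn A Xᶜ x ^ l +
      muSet X * (lam1 k l * (1 - D) ^ (k + l - 1)) := by
  classical
  calc sCond k l A 0 x
      ≤ sCondOn k l A x (fun φ => ∀ a : Fin (k + l), φ a.succ ∈ Xᶜ) +
          (∑ w : X, ∑ a : Fin (k + l), sPair k l A a.succ x w) / Fintype.card V :=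
        sCond_center_le A (by omega) X x
    _ ≤ rhoPIn A Xᶜ x ^ k * rhoMIn A Xᶜ x ^ l +
          (∑ _w : X, lam1 k l * (1 - D) ^ (k + l - 1)) / Fintype.card V := by
        gcongr with w
        · exact sCondOn_leaves_mem_le A Xᶜ x
        · exact (sum_leaves_sPair_le hopp hl hlk x w).trans (lam1_mul_pow_le k hl (hD _ w.2))
    _ = _ := by
        rw [Finset.sum_const, Finset.card_univ, nsmul_eq_mul, muSet, Nat.card_eq_fintype_card,
          div_mul_eq_mul_div]

lemma Smin_sub_le {x : V} (hx : x ∈ X) :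
    Smin k l A - lam1 k l * (1 + muSet X) * (1 - D) ^ (k + l - 1) ≤
      rhoPIn A Xᶜ x ^ k * rhoMIn A Xᶜ x ^ l := by
  have hS := (Smin_le_mul_sVert x).trans_eq (mul_sVert (A := A) (hl.trans hlk) hl x)
  have hcenter := sCond_center_le_add hopp hl hlk hD x
  have hleaves := (weighted_sCond_leaves_le hopp hl hlk ⟨0, hl.trans hlk⟩ ⟨0, hl⟩ x).trans
    (lam1_mul_pow_le k hl (hD x hx))
  linarith

end Main

theorem stmt10_general {k l : ℕ} (hl : 1 ≤ l) (hlk : l ≤ k) {V : Type*} [Fintype V]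
    {A : V → V → Prop} (hopp : ∀ u v, A u v → ¬ A v u) {X : Set V} {D γ S₁ : ℝ}
    (hD : IsLeast (rho A '' X) D) (hγ : IsLeast (rhoMIn A Xᶜ '' X) γ)
    (hS₁ : IsLeast ((fun x => rhoPIn A Xᶜ x ^ k * rhoMIn A Xᶜ x ^ l) '' X) S₁) :
    lam0 k l * (1 - muSet X) ^ (k + l) ≥ γ ^ l * (1 - muSet X - γ) ^ k ∧
    γ ^ l * (1 - muSet X - γ) ^ k ≥ S₁ ∧
    S₁ ≥ Smin k l A - lam1 k l * (1 + muSet X) * (1 - D) ^ (k + l - 1) := by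
  obtain ⟨x, hx, rfl⟩ := hγ.1
  obtain ⟨y, hy, hyS₁⟩ := hS₁.1
  have : Nonempty V := ⟨x⟩
  have hin : 0 ≤ rhoMIn A Xᶜ x := rhoMIn_nonneg A Xᶜ x
  have hout : 0 ≤ rhoPIn A Xᶜ x := rhoPIn_nonneg A Xᶜ x
  have hout_le : rhoPIn A Xᶜ x ≤ 1 - muSet X - rhoMIn A Xᶜ x := by
    linarith [rhoPIn_add_rhoMIn_le_muSet hopp Xᶜ x, muSet_compl X]
  refine ⟨?_, ?_, hyS₁ ▸ Smin_sub_le hopp hl hlk (fun x hx => hD.2 ⟨x, hx, rfl⟩) hy⟩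
  · rw [ge_iff_le, mul_comm (rhoMIn A Xᶜ x ^ l)]
    exact pow_mul_pow_le_lam0_mul_pow k l (hout.trans hout_le) hin (sub_add_cancel _ _).le
  · calc S₁ ≤ rhoPIn A Xᶜ x ^ k * rhoMIn A Xᶜ x ^ l := hS₁.2 ⟨x, hx, rfl⟩
      _ ≤ (1 - muSet X - rhoMIn A Xᶜ x) ^ k * rhoMIn A Xᶜ x ^ l := by gcongr
      _ = _ := mul_comm _ _

theorem stmt10 (k l : ℕ) (hl : 1 ≤ l) (hlk : l ≤ k) (hm : 6 ≤ k + l)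
    (V : Type) [Fintype V] (A : V → V → Prop)
    (hirr : Irreflexive A) (hopp : ∀ u v, A u v → ¬ A v u) (hn : 1 ≤ Fintype.card V)
    (hX : (bigX A).Nonempty) :
    lam0 k l * (1 - alphaX A) ^ (k + l) ≥ gammaX A ^ l * (1 - alphaX A - gammaX A) ^ k ∧
    gammaX A ^ l * (1 - alphaX A - gammaX A) ^ k ≥ S1min k l A ∧
    S1min k l A ≥ Smin k l A - lam1 k l * (1 + alphaX A) * (1 - Dmin A) ^ (k + l - 1) := by
  have hmin (f : V → ℝ) : IsLeast (f '' bigX A) (sInf (f '' bigX A)) :=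
    (Set.toFinite _).isCompact.isLeast_sInf (hX.image f)
  exact stmt10_general hl hlk hopp (hmin _) (hmin _) (hmin _)
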